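/- Let g belong to the disk algebra A(𝔻̄). Then the algebra ℂ[B,g] is dense in A(𝔻̄) (with respect to the sup norm on the closed disk) if and only if Γ(g) has no zeros in the closed unit disk. -/

import Mathlib

/-!
Let `R` be the closed subalgebra of the disk algebra `A` generated by the Blaschke product `B`.
On the unit circle `B` has no critical points, so the Vandermonde matrix of a fibre is invertible
there, uniformly by compactness; with the maximum principle this bounds each coefficient `c_k ∈ R`
by the norm of `∑ c_k z^k` (`k < n`). Since `z` satisfies over `R` a polynomial equation of degree
`n` with invertible leading coefficient, `A` is free over `R` with basis `1, z, …, z^(n-1)`, and the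
coordinates are continuous. As the units of `R` form an open set, `ℂ[B, g]` is dense in `A` iff
`R[g] = A`, that is, iff the determinant `d` of `1, g, …, g^(n-1)` in that basis is a unit of `R`.
Comparing Vandermonde determinants on a fibre without critical points gives
`d² = Norm_{A/R}(Γ(g))`, so `d` is a unit iff `Γ(g)` is a unit of `A`, i.e. has no zeros.
-/

open Complex Polynomial MeasureTheory Metric Set Filter Topology
open scoped Classical

noncomputable section

/-- The open unit disk in `ℂ`. -/
def uDisk : Set ℂ := Metric.ball 0 1

/-- The closed unit disk in `ℂ`. -/
def cDisk : Set ℂ := Metric.closedBall 0 1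

/-- The finite Blaschke product with zero set `a 0, …, a (n-1)`:
`B(z) = ∏_j (a_j - z)/(1 - conj(a_j)·z)`. -/
def blaschke {n : ℕ} (a : Fin n → ℂ) (z : ℂ) : ℂ :=
  ∏ j, (a j - z) / (1 - (starRingEnd ℂ) (a j) * z)

/-- The multiset of the `n` solutions (with multiplicity) `φ_0(z) = z, φ_1(z), …, φ_{n-1}(z)`
of `B(w) = B(z)`, realized as the roots of the polynomial equation
`∏_j (a_j - w) = B(z) · ∏_j (1 - conj(a_j)·w)`. -/
def fiberMS {n : ℕ} (a : Fin n → ℂ) (z : ℂ) : Multiset ℂ :=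
  ((∏ j, (Polynomial.C (a j) - Polynomial.X)) -
    Polynomial.C (blaschke a z) *
      ∏ j, (1 - Polynomial.C ((starRingEnd ℂ) (a j)) * Polynomial.X)).roots

/-- `𝒟(f)(z) = ∏_{j=1}^{n-1} (f(z) - f(φ_j(z)))`, where `φ_1(z), …, φ_{n-1}(z)` is the
fiber of `B` over `B(z)` with one copy of `z` removed.  In particular
`calD a id z = ∏_{j=1}^{n-1} (z - φ_j(z))`. -/
def calD {n : ℕ} (a : Fin n → ℂ) (f : ℂ → ℂ) (z : ℂ) : ℂ :=
  (((fiberMS a z).erase z).map (fun w => f z - f w)).prod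

/-- `G` is (the holomorphic extension after removing singularities of) `Γ(f) = 𝒟(f)/𝒟`. -/
def IsGamma {n : ℕ} (a : Fin n → ℂ) (f G : ℂ → ℂ) : Prop :=
  DifferentiableOn ℂ G uDisk ∧ ∀ z ∈ uDisk, G z * calD a id z = calD a f z

/-- `p`-th power integral mean of `f` on the circle of radius `r`. -/
def circMean (p : ℝ) (f : ℂ → ℂ) (r : ℝ) : ℝ :=
  ∫ θ in (0:ℝ)..(2 * Real.pi), ‖f ((r : ℂ) * Complex.exp ((θ : ℂ) * Complex.I))‖ ^ p

/-- The `H^p` norm of `f` (for `0 < p < ∞`). -/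
def hpNorm (p : ℝ) (f : ℂ → ℂ) : ℝ :=
  (sSup {m : ℝ | ∃ r ∈ Set.Ico (0:ℝ) 1, m = circMean p f r}) ^ (1 / p)

/-- Membership in the Hardy space `H^p`, `0 < p < ∞`: holomorphic on the disk with
uniformly bounded integral means. -/
def MemHp (p : ℝ) (f : ℂ → ℂ) : Prop :=
  DifferentiableOn ℂ f uDisk ∧ ∃ C : ℝ, ∀ r ∈ Set.Ico (0:ℝ) 1, circMean p f r ≤ C

/-- Membership in `H^∞`: bounded holomorphic functions on the disk. -/
def MemHinf (f : ℂ → ℂ) : Prop :=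
  DifferentiableOn ℂ f uDisk ∧ ∃ C : ℝ, ∀ z ∈ uDisk, ‖f z‖ ≤ C

/-- The `H^∞` (sup) norm. -/
def hinfNorm (f : ℂ → ℂ) : ℝ := sSup {m : ℝ | ∃ z ∈ uDisk, m = ‖f z‖}

/-- The algebra of all polynomials in the functions `F 0, …, F (m-1)`. -/
def algGen (m : ℕ) (F : Fin m → (ℂ → ℂ)) : Set (ℂ → ℂ) :=
  {h | ∃ P : MvPolynomial (Fin m) ℂ, ∀ z : ℂ, h z = MvPolynomial.eval (fun i => F i z) P}

/-- The algebra `ℂ[F,G]` of all polynomials in the two functions `F` and `G`. -/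
def algGen2 (F G : ℂ → ℂ) : Set (ℂ → ℂ) := algGen 2 ![F, G]

/-- The (sequential) closure of `S` in `H^p`. -/
def hpClosure (p : ℝ) (S : Set (ℂ → ℂ)) : Set (ℂ → ℂ) :=
  {f | MemHp p f ∧ ∃ u : ℕ → (ℂ → ℂ), (∀ k, u k ∈ S) ∧
    Filter.Tendsto (fun k => hpNorm p (fun z => f z - u k z)) Filter.atTop (nhds 0)}

/-- `S` has finite codimension in `H^p`: finitely many functions in `H^p` together with `S`
span all of `H^p`. -/
def FiniteCodimHp (p : ℝ) (S : Set (ℂ → ℂ)) : Prop :=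
  ∃ (k : ℕ) (e : Fin k → (ℂ → ℂ)), (∀ i, MemHp p (e i)) ∧
    ∀ f, MemHp p f → ∃ (c : Fin k → ℂ) (s : ℂ → ℂ), s ∈ S ∧
      ∀ z ∈ uDisk, f z = s z + ∑ i, c i * e i z

/-- Inner function: bounded by 1, holomorphic, radial limits of modulus 1 a.e. -/
def IsInner (f : ℂ → ℂ) : Prop :=
  DifferentiableOn ℂ f uDisk ∧ (∀ z ∈ uDisk, ‖f z‖ ≤ 1) ∧
  ∀ᵐ θ : ℝ ∂volume, ∃ l : ℂ, ‖l‖ = 1 ∧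
    Filter.Tendsto (fun r : ℝ => f ((r : ℂ) * Complex.exp ((θ : ℂ) * Complex.I)))
      (nhdsWithin 1 (Set.Iio 1)) (nhds l)

/-- `J` divides `h`, with a quotient holomorphic on the disk. -/
def InnerDivides (J h : ℂ → ℂ) : Prop :=
  ∃ k : ℂ → ℂ, DifferentiableOn ℂ k uDisk ∧ ∀ z ∈ uDisk, h z = J z * k z

/-- Outer function: a holomorphic function on the disk whose only inner divisors are
unimodular constants (i.e. whose inner part is a unimodular constant). -/
def IsOuter (h : ℂ → ℂ) : Prop :=
  DifferentiableOn ℂ h uDisk ∧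
  ∀ J : ℂ → ℂ, IsInner J → InnerDivides J h →
    ∃ c : ℂ, ‖c‖ = 1 ∧ ∀ z ∈ uDisk, J z = c

/-- `I` is the inner part of `h`: `I` is inner and `h = I·F` with `F` outer. -/
def IsInnerPartOf (I h : ℂ → ℂ) : Prop :=
  IsInner I ∧ ∃ F : ℂ → ℂ, IsOuter F ∧ ∀ z ∈ uDisk, h z = I z * F z

/-- Finite Blaschke product (up to a unimodular constant factor). -/
def IsFiniteBlaschke (f : ℂ → ℂ) : Prop :=
  ∃ (m : ℕ) (c : ℂ) (b : Fin m → ℂ), ‖c‖ = 1 ∧ (∀ i, b i ∈ uDisk) ∧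
    ∀ z ∈ uDisk, f z = c * ∏ i, (b i - z) / (1 - (starRingEnd ℂ) (b i) * z)

/-- `h` has no singular inner factor: every zero-free inner divisor of `h` is a
unimodular constant. -/
def NoSingularInnerFactor (h : ℂ → ℂ) : Prop :=
  ∀ J : ℂ → ℂ, IsInner J → (∀ z ∈ uDisk, J z ≠ 0) → InnerDivides J h →
    ∃ c : ℂ, ‖c‖ = 1 ∧ ∀ z ∈ uDisk, J z = c

/-- The disk algebra `A(𝔻̄)`: continuous on the closed disk, holomorphic on the open disk. -/
def MemDiskAlg (f : ℂ → ℂ) : Prop :=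
  ContinuousOn f cDisk ∧ DifferentiableOn ℂ f uDisk

/-- The closure of `S` in the disk algebra, with respect to the sup norm on `𝔻̄`. -/
def daClosure (S : Set (ℂ → ℂ)) : Set (ℂ → ℂ) :=
  {f | MemDiskAlg f ∧ ∀ ε : ℝ, 0 < ε → ∃ h ∈ S, ∀ z ∈ cDisk, ‖f z - h z‖ ≤ ε}

/-- `S` has finite codimension in the disk algebra `A(𝔻̄)`. -/
def FiniteCodimDA (S : Set (ℂ → ℂ)) : Prop :=
  ∃ (k : ℕ) (e : Fin k → (ℂ → ℂ)), (∀ i, MemDiskAlg (e i)) ∧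
    ∀ f, MemDiskAlg f → ∃ (c : Fin k → ℂ) (s : ℂ → ℂ), s ∈ S ∧
      ∀ z ∈ cDisk, f z = s z + ∑ i, c i * e i z

/-! ### Algebras with a finite basis -/

lemma span_range_pow_eq_adjoin {R A : Type*} [CommRing R] [CommRing A] [Algebra R A] {n : ℕ}
    {x : A} {p : R[X]} (hunit : IsUnit (p.coeff n)) (hdeg : p.natDegree ≤ n)
    (hx : aeval x p = 0) :
    Submodule.span R (range fun k : Fin n => x ^ (k : ℕ)) =
      Subalgebra.toSubmodule (Algebra.adjoin R {x}) := by
  nontriviality R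
  obtain rfl : p.natDegree = n := hdeg.antisymm (le_natDegree_of_ne_zero hunit.ne_zero)
  have hlead : IsUnit p.leadingCoeff := hunit
  have hnormdeg : (hlead.unit⁻¹ • p).natDegree = p.natDegree :=
    natDegree_smul_of_smul_regular _ (isSMulRegular_of_group _)
  have hnormx : aeval x (hlead.unit⁻¹ • p) = 0 := by
    rw [Units.smul_def, map_smul, hx, smul_zero]
  rw [← Submodule.span_range_natDegree_eq_adjoin (monic_of_isUnit_leadingCoeff_inv_smul hlead)
    hnormx, hnormdeg]
  congr 1
  ext y
  simp [Fin.exists_iff]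

lemma isClosed_span_range_of_norm_le {ι R A : Type*} [Fintype ι] [NormedRing R] [CompleteSpace R]
    [NormedAddCommGroup A] [Module R A] [ContinuousSMul R A] {v : ι → A} {K : ℝ}
    (hK : ∀ (c : ι → R) (i : ι), ‖c i‖ ≤ K * ‖∑ i, c i • v i‖) :
    IsClosed (Submodule.span R (range v) : Set A) := by
  set Φ := Fintype.linearCombination R v
  have hbound (c : ι → R) : ‖c‖ ≤ K.toNNReal * ‖Φ c‖ := by
    refine (pi_norm_le_iff_of_nonneg (by positivity)).mpr fun i => (hK c i).trans ?_
    exact mul_le_mul_of_nonneg_right (Real.le_coe_toNNReal K) (norm_nonneg _)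
  have hcont : Continuous Φ := by
    change Continuous fun c : ι → R => ∑ i, c i • v i
    fun_prop
  rw [← Fintype.range_linearCombination]
  exact (AddMonoidHomClass.antilipschitz_of_bound Φ hbound).isClosed_range
    (uniformContinuous_addMonoidHom_of_continuous hcont)

lemma span_range_pow_eq_top_of_norm_le {R A : Type*} [NormedCommRing R] [CompleteSpace R]
    [NormedCommRing A] [Algebra R A] [ContinuousSMul R A] {n : ℕ} {x : A} {p : R[X]}
    (hunit : IsUnit (p.coeff n)) (hdeg : p.natDegree ≤ n) (hx : aeval x p = 0) {K : ℝ}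
    (hK : ∀ (c : Fin n → R) (i : Fin n), ‖c i‖ ≤ K * ‖∑ k, c k • x ^ (k : ℕ)‖)
    (hdense : Dense (Algebra.adjoin R {x} : Set A)) :
    Submodule.span R (range fun k : Fin n => x ^ (k : ℕ)) = ⊤ := by
  have hclosed := isClosed_span_range_of_norm_le hK
  rw [span_range_pow_eq_adjoin hunit hdeg hx] at hclosed ⊢
  exact SetLike.coe_injective (hclosed.closure_eq.symm.trans hdense.closure_eq)

lemma linearIndependent_of_norm_le {ι R A : Type*} [Fintype ι] [NormedRing R]
    [NormedAddCommGroup A] [Module R A] {v : ι → A} {K : ℝ}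
    (hK : ∀ (c : ι → R) (i : ι), ‖c i‖ ≤ K * ‖∑ i, c i • v i‖) : LinearIndependent R v :=
  Fintype.linearIndependent_iff.mpr fun c hc i => by
    simpa [hc] using hK c i

lemma continuous_repr_of_norm_le {ι R A : Type*} [Fintype ι] [NormedRing R]
    [NormedAddCommGroup A] [Module R A] (b : Module.Basis ι R A) {K : ℝ}
    (hK : ∀ (c : ι → R) (i : ι), ‖c i‖ ≤ K * ‖∑ i, c i • b i‖) (i : ι) :
    Continuous fun x => b.repr x i :=
  AddMonoidHomClass.continuous_of_bound (b.coord i) K fun x => by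
    simpa only [b.sum_repr, b.coord_apply] using hK (b.repr x) i

lemma isUnit_norm_iff {ι R A : Type*} [Finite ι] [CommRing R] [CommRing A] [Algebra R A]
    (b : Module.Basis ι R A) {x : A} : IsUnit (Algebra.norm R x) ↔ IsUnit x := by
  have := Module.Free.of_basis b
  have := Module.Finite.of_basis b
  rw [Algebra.norm_apply, ← LinearMap.isUnit_iff_isUnit_det, Algebra.lmul_isUnit_iff]

lemma isUnit_det_iff_span_eq_top {ι R A : Type*} [Fintype ι] [DecidableEq ι] [CommRing R]
    [AddCommGroup A] [Module R A] (b : Module.Basis ι R A) {v : ι → A} :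
    IsUnit (b.det v) ↔ Submodule.span R (range v) = ⊤ := by
  rw [← b.is_basis_iff_det]
  refine ⟨And.right, fun hspan => ⟨?_, hspan⟩⟩
  nontriviality R
  exact linearIndependent_of_top_le_span_of_card_eq_finrank hspan.ge
    (Module.finrank_eq_card_basis b).symm

lemma adjoin_eq_top_iff_isUnit_det {R A : Type*} [CommRing R] [CommRing A] [Algebra R A] {n : ℕ}
    (b : Module.Basis (Fin n) R A) {x : A} :
    Algebra.adjoin R {x} = ⊤ ↔ IsUnit (b.det fun k => x ^ (k : ℕ)) := by
  rcases subsingleton_or_nontrivial R with _ | _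
  · have := Module.subsingleton R A
    exact iff_of_true (eq_top_iff.mpr fun y _ => Subsingleton.elim x y ▸
      Algebra.self_mem_adjoin_singleton R x) (isUnit_of_subsingleton _)
  obtain ⟨p, hmonic, hdeg, hroot⟩ : ∃ p : R[X], p.Monic ∧ p.natDegree = n ∧ aeval x p = 0 := by
    refine ⟨(Algebra.leftMulMatrix b x).charpoly, Matrix.charpoly_monic _,
      (Matrix.charpoly_natDegree_eq_dim _).trans (Fintype.card_fin n),
      Algebra.leftMulMatrix_injective b ?_⟩
    rw [← aeval_algHom_apply, Matrix.aeval_self_charpoly, map_zero]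
  have hunit : IsUnit (p.coeff n) := by
    rw [← hdeg, hmonic.coeff_natDegree]
    exact isUnit_one
  rw [isUnit_det_iff_span_eq_top, span_range_pow_eq_adjoin hunit hdeg.le hroot,
    Algebra.toSubmodule_eq_top]

/- Near the basis `b`, tuples of vectors of `M` are still bases, the units of `R` being open. -/
lemma eq_top_of_dense_of_continuous_repr {ι R A : Type*} [Finite ι] [NormedCommRing R]
    [CompleteSpace R] [TopologicalSpace A] [AddCommGroup A] [Module R A]
    (b : Module.Basis ι R A) (hb : ∀ i, Continuous fun x => b.repr x i) {M : Submodule R A}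
    (hM : Dense (M : Set A)) : M = ⊤ := by
  cases nonempty_fintype ι
  have hdet : Continuous fun v : ι → A => b.det v := by
    simp only [b.det_apply]
    exact (continuous_matrix fun i j => (hb i).comp (continuous_apply j)).matrix_det
  obtain ⟨v, hvM, hv⟩ := (dense_pi univ fun _ _ => hM).exists_mem_open
    (Units.isOpen.preimage hdet) ⟨b, by rw [mem_preimage, b.det_self]; exact isUnit_one⟩
  rw [eq_top_iff, ← (isUnit_det_iff_span_eq_top b).mp hv, Submodule.span_le]
  exact range_subset_iff.mpr fun i => hvM i (mem_univ i)

section Conjugates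

open Matrix

variable {R A K : Type*} [CommRing R] [CommRing A] [Algebra R A] [Field K] {ev : R →+* K}

section

variable {ι : Type*} [Fintype ι] [DecidableEq ι] (b : Module.Basis ι R A) {σ : ι → A →+* K}

lemma det_conjugates_mul_map_det (hσ : ∀ j r, σ j (algebraMap R A r) = ev r) (v : ι → A) :
    (of fun j k => σ j (b k)).det * ev (b.det v) = (of fun j l => σ j (v l)).det := by
  rw [b.det_apply, RingHom.map_det, ← det_mul]
  congr 1
  ext j l
  conv_rhs => rw [of_apply, ← b.sum_toMatrix_smul_self v l, map_sum]
  simp only [mul_apply, of_apply, RingHom.mapMatrix_apply, map_apply, Algebra.smul_def, map_mul, hσ,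
    mul_comm]

lemma map_norm_eq_prod_conjugates (hσ : ∀ j r, σ j (algebraMap R A r) = ev r)
    (hdet : (of fun j k => σ j (b k)).det ≠ 0) (x : A) :
    ev (Algebra.norm R x) = ∏ j, σ j x := by
  have hmul : (of fun j k => σ j (x * b k)) =
      diagonal (fun j => σ j x) * of fun j k => σ j (b k) := by
    ext j k
    rw [diagonal_mul, of_apply, of_apply, map_mul]
  have hnorm : Algebra.norm R x = b.det fun k => x * b k := by
    rw [Algebra.norm_eq_matrix_det b, b.det_apply]
    congr 1
    ext j k
    rw [Algebra.leftMulMatrix_eq_repr_mul, Module.Basis.toMatrix_apply]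
  refine mul_left_cancel₀ hdet ?_
  rw [hnorm, det_conjugates_mul_map_det b hσ, hmul, det_mul, det_diagonal, mul_comm]

end

lemma prod_prod_compl_sub {n : ℕ} (v : Fin n → K) :
    ∏ i, ∏ j ∈ {i}ᶜ, (v i - v j) =
      (∏ i : Fin n, ∏ _j ∈ Finset.Ioi i, -1) * (vandermonde v).det ^ 2 := by
  rw [← Finset.prod_prod_Ioi_mul_eq_prod_prod_off_diag fun j i => v i - v j, det_vandermonde]
  simp only [← Finset.prod_pow, ← Finset.prod_mul_distrib]
  exact Finset.prod_congr rfl fun i _ => Finset.prod_congr rfl fun j _ => by ring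

lemma map_det_pow_sq_eq_map_norm {n : ℕ} {σ : Fin n → A →+* K}
    (b : Module.Basis (Fin n) R A) {x y γ : A} (hb : ∀ k, b k = y ^ (k : ℕ))
    (hσ : ∀ j r, σ j (algebraMap R A r) = ev r) (hinj : Function.Injective fun j => σ j y)
    (hγ : ∀ i, σ i γ * ∏ j ∈ {i}ᶜ, (σ i y - σ j y) = ∏ j ∈ {i}ᶜ, (σ i x - σ j x)) :
    ev ((b.det fun k => x ^ (k : ℕ)) ^ 2) = ev (Algebra.norm R γ) := by
  have hpow (t : A) : (of fun j (k : Fin n) => σ j (t ^ (k : ℕ))) = vandermonde fun j => σ j t := by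
    ext j k
    rw [of_apply, map_pow, vandermonde_apply]
  have hbdet : (of fun j k => σ j (b k)).det = (vandermonde fun j => σ j y).det := by
    simp only [hb, hpow]
  have hdet : (vandermonde fun j => σ j y).det ≠ 0 := det_vandermonde_ne_zero_iff.mpr hinj
  have hcramer := det_conjugates_mul_map_det b hσ fun k => x ^ (k : ℕ)
  rw [hbdet, hpow x] at hcramer
  have hdisc := Finset.prod_congr (s₁ := Finset.univ) rfl fun i _ => hγ i
  rw [Finset.prod_mul_distrib, prod_prod_compl_sub, prod_prod_compl_sub, mul_left_comm,
    ← hcramer] at hdisc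
  have hsign : (∏ i : Fin n, ∏ _j ∈ Finset.Ioi i, (-1 : K)) ≠ 0 := by
    simp [Finset.prod_ne_zero_iff]
  rw [map_norm_eq_prod_conjugates b hσ (hbdet ▸ hdet), map_pow]
  refine mul_left_cancel₀ (mul_ne_zero hsign (pow_ne_zero 2 hdet)) ?_
  linear_combination -hdisc

end Conjugates

/-! ### The disk algebra -/

lemma mem_uDisk {z : ℂ} : z ∈ uDisk ↔ ‖z‖ < 1 := mem_ball_zero_iff

lemma mem_cDisk {z : ℂ} : z ∈ cDisk ↔ ‖z‖ ≤ 1 := mem_closedBall_zero_iff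

lemma uDisk_subset_cDisk : uDisk ⊆ cDisk := ball_subset_closedBall

lemma isOpen_uDisk : IsOpen uDisk := isOpen_ball

lemma closure_uDisk : closure uDisk = cDisk := closure_ball 0 one_ne_zero

lemma isCompact_cDisk : IsCompact cDisk := isCompact_closedBall 0 1

instance : CompactSpace cDisk := isCompact_iff_compactSpace.mp isCompact_cDisk

lemma MemDiskAlg.inv {f : ℂ → ℂ} (hf : MemDiskAlg f) (hf0 : ∀ z ∈ cDisk, f z ≠ 0) :
    MemDiskAlg f⁻¹ :=
  ⟨hf.1.inv₀ hf0, hf.2.inv fun z hz => hf0 z (uDisk_subset_cDisk hz)⟩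

lemma memDiskAlg_polynomial (p : ℂ[X]) : MemDiskAlg (fun z => p.eval z) :=
  ⟨p.continuous.continuousOn, p.differentiable.differentiableOn⟩

lemma exists_polynomial_norm_sub_le_of_differentiableOn_closedBall {f : ℂ → ℂ} {s : NNReal}
    (hs : 1 < s) (hf : DifferentiableOn ℂ f (closedBall 0 s)) {ε : ℝ} (hε : 0 < ε) :
    ∃ p : ℂ[X], ∀ z ∈ cDisk, ‖f z - p.eval z‖ ≤ ε := by
  have hseries := hf.hasFPowerSeriesOnBall (zero_lt_one.trans hs)
  obtain ⟨t, ht1, hts⟩ := exists_between hs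
  have hunif := hseries.tendstoUniformlyOn (ENNReal.coe_lt_coe.mpr hts)
  obtain ⟨N, hN⟩ := (Metric.tendstoUniformlyOn_iff.mp hunif ε hε).exists
  set taylor := cauchyPowerSeries f 0 s
  refine ⟨∑ k ∈ Finset.range N, C (taylor.coeff k) * X ^ k, fun z hz => ?_⟩
  have heval : (∑ k ∈ Finset.range N, C (taylor.coeff k) * X ^ k).eval z =
      taylor.partialSum N z := by
    simp only [FormalMultilinearSeries.partialSum, eval_finsetSum, eval_mul, eval_C, eval_pow,
      eval_X, FormalMultilinearSeries.apply_eq_pow_smul_coeff, smul_eq_mul, mul_comm]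
  have hzt : z ∈ ball (0 : ℂ) t :=
    mem_ball_zero_iff.mpr ((mem_cDisk.mp hz).trans_lt (NNReal.coe_lt_coe.mpr ht1))
  simpa [heval, dist_eq_norm] using (hN z hzt).le

lemma MemDiskAlg.exists_dilation_norm_sub_le {f : ℂ → ℂ} (hf : MemDiskAlg f) {ε : ℝ}
    (hε : 0 < ε) : ∃ r : ℝ, 0 < r ∧ r < 1 ∧ ∀ z ∈ cDisk, ‖f z - f (r * z)‖ ≤ ε := by
  obtain ⟨δ, hδ, hfδ⟩ := Metric.uniformContinuousOn_iff.mp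
    (isCompact_cDisk.uniformContinuousOn_of_continuous hf.1) ε hε
  obtain ⟨r, hr, hr1⟩ := exists_between (max_lt (sub_lt_self 1 hδ) one_pos)
  obtain ⟨hrδ, hr0⟩ := max_lt_iff.mp hr
  refine ⟨r, hr0, hr1, fun z hz => ?_⟩
  have hz1 := mem_cDisk.mp hz
  have hrz : (r : ℂ) * z ∈ cDisk := by
    rw [mem_cDisk, norm_mul, Complex.norm_of_nonneg hr0.le]
    exact mul_le_one₀ hr1.le (norm_nonneg z) hz1
  have hdist : dist z (r * z) < δ := by
    have hsub : z - r * z = ((1 - r : ℝ) : ℂ) * z := by push_cast; ring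
    rw [dist_eq_norm, hsub, norm_mul, Complex.norm_of_nonneg (sub_nonneg.mpr hr1.le)]
    nlinarith [norm_nonneg z]
  simpa only [dist_eq_norm] using (hfδ z hz _ hrz hdist).le

lemma MemDiskAlg.exists_polynomial_norm_sub_le {f : ℂ → ℂ} (hf : MemDiskAlg f) {ε : ℝ}
    (hε : 0 < ε) : ∃ p : ℂ[X], ∀ z ∈ cDisk, ‖f z - p.eval z‖ ≤ ε := by
  obtain ⟨r, hr0, hr1, hr⟩ := hf.exists_dilation_norm_sub_le (half_pos hε)
  obtain ⟨s, hs1, hsr⟩ := exists_between ((one_lt_inv₀ hr0).mpr hr1)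
  lift s to NNReal using zero_le_one.trans hs1.le
  have hdiff : DifferentiableOn ℂ (fun z => f (r * z)) (closedBall 0 s) := by
    refine hf.2.comp (by fun_prop) fun z hz => ?_
    rw [mem_uDisk, norm_mul, Complex.norm_of_nonneg hr0.le]
    calc r * ‖z‖ ≤ r * s := by gcongr; exact mem_closedBall_zero_iff.mp hz
      _ < r * r⁻¹ := by gcongr
      _ = 1 := mul_inv_cancel₀ hr0.ne'
  obtain ⟨p, hp⟩ := exists_polynomial_norm_sub_le_of_differentiableOn_closedBall
    (mod_cast hs1) hdiff (half_pos hε)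
  refine ⟨p, fun z hz => ?_⟩
  calc ‖f z - p.eval z‖
      ≤ ‖f z - f (r * z)‖ + ‖f (r * z) - p.eval z‖ := norm_sub_le_norm_sub_add_norm_sub ..
    _ ≤ ε / 2 + ε / 2 := add_le_add (hr z hz) (hp z hz)
    _ = ε := add_halves ε

/-- The identity function of the closed disk. -/
def diskCoord : C(cDisk, ℂ) := ⟨Subtype.val, continuous_subtype_val⟩

/-- The closed subalgebra of `C(cDisk, ℂ)` generated by the coordinate. Its elements are the
restrictions to `cDisk` of the functions satisfying `MemDiskAlg`. -/
def diskSubalgebra : Subalgebra ℂ C(cDisk, ℂ) := Algebra.elemental ℂ diskCoord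

lemma aeval_diskCoord_apply (p : ℂ[X]) (z : cDisk) : aeval diskCoord p z = p.eval (z : ℂ) := by
  rw [aeval_continuousMap_apply]
  rfl

lemma MemDiskAlg.restrict_mem_diskSubalgebra {F : ℂ → ℂ} (hF : MemDiskAlg F) :
    (⟨cDisk.domRestrict F, hF.1.domRestrict⟩ : C(cDisk, ℂ)) ∈ diskSubalgebra := by
  refine Metric.mem_closure_iff.mpr fun ε hε => ?_
  obtain ⟨p, hp⟩ := hF.exists_polynomial_norm_sub_le (half_pos hε)
  refine ⟨aeval diskCoord p, aeval_mem_adjoin_singleton ℂ diskCoord, ?_⟩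
  refine ((ContinuousMap.dist_le (half_pos hε).le).mpr fun z => ?_).trans_lt (half_lt_self hε)
  rw [dist_eq_norm, aeval_diskCoord_apply]
  exact hp z z.2

lemma exists_memDiskAlg_of_mem_diskSubalgebra {f : C(cDisk, ℂ)} (hf : f ∈ diskSubalgebra) :
    ∃ F : ℂ → ℂ, MemDiskAlg F ∧ ∀ z : cDisk, F z = f z := by
  obtain ⟨q, hq, hqf⟩ := mem_closure_iff_seq_limit.mp hf
  have hpoly (k : ℕ) : ∃ p : ℂ[X], aeval diskCoord p = q k := by
    rw [← AlgHom.mem_range, ← Algebra.adjoin_singleton_eq_range_aeval]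
    exact hq k
  choose p hp using hpoly
  set F : ℂ → ℂ := Function.extend Subtype.val f 0
  have hFf (z : cDisk) : F z = f z := Subtype.val_injective.extend_apply f 0 z
  have hlim : TendstoUniformlyOn (fun k z => (p k).eval z) F atTop cDisk := by
    rw [Metric.tendstoUniformlyOn_iff]
    intro ε hε
    filter_upwards [Metric.tendsto_nhds.mp hqf ε hε] with k hk z hz
    calc dist (F z) ((p k).eval z) = dist (q k ⟨z, hz⟩) (f ⟨z, hz⟩) := by
          rw [dist_comm, hFf ⟨z, hz⟩, ← hp, aeval_diskCoord_apply]
      _ ≤ dist (q k) f := ContinuousMap.dist_apply_le_dist _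
      _ < ε := hk
  refine ⟨F, ⟨hlim.continuousOn (.of_forall fun k => (memDiskAlg_polynomial (p k)).1), ?_⟩, hFf⟩
  exact (hlim.mono uDisk_subset_cDisk).tendstoLocallyUniformlyOn.differentiableOn
    (.of_forall fun k => (memDiskAlg_polynomial (p k)).2) isOpen_uDisk

/-- The disk algebra as a Banach algebra. It is a type of its own, rather than `diskSubalgebra`
coerced to a type, so that its own subalgebras are not subalgebras of a subalgebra. -/
def DiskAlgebra : Type := diskSubalgebra

instance : NormedCommRing DiskAlgebra := inferInstanceAs (NormedCommRing diskSubalgebra)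

instance : NormedAlgebra ℂ DiskAlgebra := inferInstanceAs (NormedAlgebra ℂ diskSubalgebra)

instance : CompleteSpace DiskAlgebra :=
  (Algebra.elemental.isClosed ℂ diskCoord).completeSpace_coe

/-- A function in the sense of `MemDiskAlg`, as an element of the Banach algebra. -/
def MemDiskAlg.toDiskAlgebra {F : ℂ → ℂ} (hF : MemDiskAlg F) : DiskAlgebra :=
  ⟨⟨cDisk.domRestrict F, hF.1.domRestrict⟩, hF.restrict_mem_diskSubalgebra⟩

namespace DiskAlgebra

/-- Evaluation at a point of the closed disk, as a character of the disk algebra. -/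
def evalAt (z : cDisk) : DiskAlgebra →ₐ[ℂ] ℂ :=
  (ContinuousMap.evalAlgHom ℂ ℂ z).comp diskSubalgebra.val

lemma continuous_evalAt (z : cDisk) : Continuous (evalAt z) :=
  (continuous_eval_const z).comp continuous_subtype_val

lemma norm_evalAt_le (z : cDisk) (f : DiskAlgebra) : ‖evalAt z f‖ ≤ ‖f‖ :=
  f.1.norm_coe_le_norm z

@[ext]
lemma ext_evalAt {f g : DiskAlgebra} (h : ∀ z, evalAt z f = evalAt z g) : f = g :=
  Subtype.ext (ContinuousMap.ext h)

/-- The coordinate function `z`. -/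
def coord : DiskAlgebra := ⟨diskCoord, Algebra.elemental.self_mem ℂ diskCoord⟩

@[simp]
lemma evalAt_coord (z : cDisk) : evalAt z coord = z := rfl

lemma exists_eq_toDiskAlgebra (f : DiskAlgebra) :
    ∃ (F : ℂ → ℂ) (hF : MemDiskAlg F), hF.toDiskAlgebra = f := by
  obtain ⟨F, hF, hFf⟩ := exists_memDiskAlg_of_mem_diskSubalgebra f.2
  exact ⟨F, hF, ext_evalAt hFf⟩

lemma eq_of_forall_evalAt_eq_of_countable {f g : DiskAlgebra} {s : Set ℂ} (hs : s.Countable)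
    (h : ∀ z : cDisk, (z : ℂ) ∈ uDisk \ s → evalAt z f = evalAt z g) : f = g := by
  obtain ⟨F, hF, rfl⟩ := exists_eq_toDiskAlgebra f
  obtain ⟨G, hG, rfl⟩ := exists_eq_toDiskAlgebra g
  have hsub : uDisk \ s ⊆ cDisk := sdiff_subset.trans uDisk_subset_cDisk
  have hdense : cDisk ⊆ closure (uDisk \ s) := by
    rw [← closure_uDisk]
    exact closure_minimal ((hs.dense_compl ℝ).open_subset_closure_inter isOpen_uDisk)
      isClosed_closure
  have heq : EqOn F G (uDisk \ s) := fun z hz => h ⟨z, hsub hz⟩ hz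
  exact ext_evalAt fun z => heq.of_subset_closure hF.1 hG.1 hsub hdense z.2

lemma norm_le_iff {f : DiskAlgebra} {K : ℝ} (hK : 0 ≤ K) : ‖f‖ ≤ K ↔ ∀ z, ‖evalAt z f‖ ≤ K :=
  ContinuousMap.norm_le _ hK

lemma isUnit_iff_forall_evalAt_ne_zero {f : DiskAlgebra} : IsUnit f ↔ ∀ z, evalAt z f ≠ 0 := by
  refine ⟨fun hf z => (hf.map (evalAt z)).ne_zero, fun hf => ?_⟩
  obtain ⟨F, hF, rfl⟩ := exists_eq_toDiskAlgebra f
  have hF0 : ∀ z ∈ cDisk, F z ≠ 0 := fun z hz => hf ⟨z, hz⟩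
  refine IsUnit.of_mul_eq_one (hF.inv hF0).toDiskAlgebra (ext_evalAt fun z => ?_)
  rw [map_mul, map_one]
  exact mul_inv_cancel₀ (hF0 z z.2)

lemma norm_le_of_forall_circle {f : DiskAlgebra} {K : ℝ} (hK : 0 ≤ K)
    (h : ∀ z : cDisk, ‖(z : ℂ)‖ = 1 → ‖evalAt z f‖ ≤ K) : ‖f‖ ≤ K := by
  obtain ⟨F, hF, rfl⟩ := exists_eq_toDiskAlgebra f
  refine (norm_le_iff hK).mpr fun z => ?_
  refine Complex.norm_le_of_forall_mem_frontier_norm_le (U := uDisk) isBounded_ball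
    ⟨hF.2, by rw [closure_uDisk]; exact hF.1⟩ (fun w hw => ?_) (by rw [closure_uDisk]; exact z.2)
  rw [uDisk, frontier_ball _ one_ne_zero] at hw
  exact h ⟨w, sphere_subset_closedBall hw⟩ (mem_sphere_zero_iff_norm.mp hw)

lemma evalAt_aeval_coord (p : ℂ[X]) (z : cDisk) : evalAt z (aeval coord p) = p.eval (z : ℂ) := by
  rw [← aeval_algHom_apply, evalAt_coord, coe_aeval_eq_eval]

lemma dense_adjoin_coord : Dense (Algebra.adjoin ℂ {coord} : Set DiskAlgebra) := by
  refine fun f => Metric.mem_closure_iff.mpr fun ε hε => ?_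
  obtain ⟨F, hF, rfl⟩ := exists_eq_toDiskAlgebra f
  obtain ⟨p, hp⟩ := hF.exists_polynomial_norm_sub_le (half_pos hε)
  refine ⟨aeval coord p, aeval_mem_adjoin_singleton ℂ coord, ?_⟩
  rw [dist_eq_norm]
  refine ((norm_le_iff (half_pos hε).le).mpr fun z => ?_).trans_lt (half_lt_self hε)
  rw [map_sub, evalAt_aeval_coord]
  exact hp z z.2

lemma evalAt_aeval_toDiskAlgebra {ι : Type*} {F : ι → ℂ → ℂ} (hF : ∀ i, MemDiskAlg (F i))
    (P : MvPolynomial ι ℂ) (z : cDisk) :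
    evalAt z (MvPolynomial.aeval (fun i => (hF i).toDiskAlgebra) P) =
      MvPolynomial.eval (fun i => F i z) P := by
  rw [MvPolynomial.comp_aeval_apply]
  rfl

lemma dense_adjoin_range_iff {m : ℕ} {F : Fin m → ℂ → ℂ} (hF : ∀ i, MemDiskAlg (F i)) :
    Dense (Algebra.adjoin ℂ (range fun i => (hF i).toDiskAlgebra) : Set DiskAlgebra) ↔
      ∀ f, MemDiskAlg f → f ∈ daClosure (algGen m F) := by
  rw [Algebra.adjoin_range_eq_range_aeval]
  constructor
  · refine fun hdense f hf => ⟨hf, fun ε hε => ?_⟩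
    obtain ⟨_, ⟨P, rfl⟩, hP⟩ := Metric.mem_closure_iff.mp (hdense hf.toDiskAlgebra) ε hε
    refine ⟨fun z => MvPolynomial.eval (fun i => F i z) P, ⟨P, fun _ => rfl⟩, fun z hz => ?_⟩
    have hPz := (norm_le_iff hε.le).mp (dist_eq_norm (hf.toDiskAlgebra) _ ▸ hP.le) ⟨z, hz⟩
    rw [map_sub] at hPz
    change ‖f z - MvPolynomial.eval (fun i => F i z) P‖ ≤ ε
    rwa [← evalAt_aeval_toDiskAlgebra hF P ⟨z, hz⟩]
  · refine fun h x => Metric.mem_closure_iff.mpr fun ε hε => ?_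
    obtain ⟨f, hf, rfl⟩ := exists_eq_toDiskAlgebra x
    obtain ⟨q, ⟨P, hP⟩, hq⟩ := (h f hf).2 (ε / 2) (half_pos hε)
    refine ⟨_, ⟨P, rfl⟩, lt_of_le_of_lt ?_ (half_lt_self hε)⟩
    rw [dist_eq_norm, norm_le_iff (half_pos hε).le]
    intro z
    rw [map_sub]
    exact (evalAt_aeval_toDiskAlgebra hF P z).trans (hP z).symm ▸ hq z z.2

lemma dense_adjoin_pair_iff {F G : ℂ → ℂ} (hF : MemDiskAlg F) (hG : MemDiskAlg G) :
    Dense (Algebra.adjoin ℂ {hF.toDiskAlgebra, hG.toDiskAlgebra} : Set DiskAlgebra) ↔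
      ∀ f, MemDiskAlg f → f ∈ daClosure (algGen2 F G) := by
  have hFG : ∀ i, MemDiskAlg (![F, G] i) := Fin.forall_fin_two.mpr ⟨hF, hG⟩
  have hrange : range (fun i => (hFG i).toDiskAlgebra) = {hF.toDiskAlgebra, hG.toDiskAlgebra} := by
    ext x
    simp only [mem_range, Fin.exists_fin_two, mem_insert_iff, mem_singleton_iff, eq_comm (a := x)]
    rfl
  rw [← hrange, dense_adjoin_range_iff hFG, algGen2]

end DiskAlgebra

/-! ### Fibres and critical points of a finite Blaschke product -/

lemma norm_one_sub_conj_mul_sq_sub (a w : ℂ) :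
    ‖1 - (starRingEnd ℂ) a * w‖ ^ 2 - ‖a - w‖ ^ 2 = (1 - ‖a‖ ^ 2) * (1 - ‖w‖ ^ 2) := by
  simp only [← Complex.normSq_eq_norm_sq, Complex.normSq_apply, sub_re, sub_im, mul_re, mul_im,
    conj_re, conj_im, one_re, one_im]
  ring

lemma cmp_norm_sub_norm_one_sub_conj_mul {a : ℂ} (ha : a ∈ uDisk) (w : ℂ) :
    cmp ‖a - w‖ ‖1 - (starRingEnd ℂ) a * w‖ = cmp ‖w‖ 1 := by
  have ha1 := mem_uDisk.mp ha
  have hpos : 0 < 1 - ‖a‖ ^ 2 := by nlinarith [norm_nonneg a]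
  have hsq : cmp (‖a - w‖ ^ 2) (‖1 - (starRingEnd ℂ) a * w‖ ^ 2) = cmp (‖w‖ ^ 2) (1 ^ 2) := by
    rw [← cmp_sub_zero (‖a - w‖ ^ 2), ← cmp_mul_pos_left hpos (‖w‖ ^ 2), ← cmp_sub_zero (_ * _)]
    congr 1
    linear_combination -norm_one_sub_conj_mul_sq_sub a w
  have hmono := pow_left_strictMonoOn₀ (M₀ := ℝ) two_ne_zero
  rwa [hmono.cmp_map_eq (norm_nonneg _) (norm_nonneg _),
    hmono.cmp_map_eq (norm_nonneg _) (zero_le_one (α := ℝ))] at hsq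

lemma one_sub_conj_mul_ne_zero {a w : ℂ} (ha : a ∈ uDisk) (hw : w ∈ cDisk) :
    1 - (starRingEnd ℂ) a * w ≠ 0 := by
  refine sub_ne_zero.mpr fun h => lt_irrefl (1 : ℝ) ?_
  calc (1 : ℝ) = ‖a‖ * ‖w‖ := by rw [← norm_one (α := ℂ), h, norm_mul, RCLike.norm_conj]
    _ < 1 := mul_lt_one_of_nonneg_of_lt_one_left (norm_nonneg a) (mem_uDisk.mp ha)
      (mem_cDisk.mp hw)

lemma prod_lt_prod_of_nonempty_of_nonneg {ι R : Type*} [CommSemiring R] [PartialOrder R]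
    [IsStrictOrderedRing R] {s : Finset ι} (hs : s.Nonempty) {f g : ι → R}
    (hf : ∀ i ∈ s, 0 ≤ f i) (hfg : ∀ i ∈ s, f i < g i) : ∏ i ∈ s, f i < ∏ i ∈ s, g i := by
  induction hs using Finset.Nonempty.cons_induction with
  | singleton i => simpa using hfg i
  | cons i s hi _ ih =>
    rw [Finset.forall_mem_cons] at hf hfg
    rw [Finset.prod_cons, Finset.prod_cons]
    exact mul_lt_mul'' hfg.1 (ih hf.2 hfg.2) hf.1 (Finset.prod_nonneg hf.2)

lemma eval_derivative_prod_div_eval_prod {ι K : Type*} [Field K] (s : Finset ι) (f : ι → K[X])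
    {x : K} (hf : ∀ i ∈ s, (f i).eval x ≠ 0) :
    (derivative (∏ i ∈ s, f i)).eval x / (∏ i ∈ s, f i).eval x =
      ∑ i ∈ s, (derivative (f i)).eval x / (f i).eval x := by
  rw [derivative_prod_finset, eval_finsetSum, Finset.sum_div]
  refine Finset.sum_congr rfl fun i hi => ?_
  rw [← Finset.prod_erase_mul s f hi, eval_mul, eval_mul, eval_prod]
  exact mul_div_mul_left _ _ <| Finset.prod_ne_zero_iff.mpr fun j hj =>
    hf j (Finset.mem_of_mem_erase hj)

lemma mul_neg_one_div_sub_conj_div {a w : ℂ} (hw : ‖w‖ = 1) (haw : a - w ≠ 0) :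
    w * (-1 / (a - w) - -(starRingEnd ℂ) a / (1 - (starRingEnd ℂ) a * w)) =
      (((1 - ‖a‖ ^ 2) / ‖a - w‖ ^ 2 : ℝ) : ℂ) := by
  have hw0 : w ≠ 0 := norm_ne_zero_iff.mp (hw ▸ one_ne_zero)
  have hconj : (starRingEnd ℂ) (a - w) ≠ 0 := (_root_.map_ne_zero _).mpr haw
  have hunit : w * (starRingEnd ℂ) w = 1 := by rw [Complex.mul_conj', hw]; simp
  have hreflect : 1 - (starRingEnd ℂ) a * w = -(w * (starRingEnd ℂ) (a - w)) := by
    rw [map_sub]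
    linear_combination -hunit
  push_cast
  rw [hreflect, ← Complex.mul_conj', ← Complex.mul_conj']
  rw [map_sub] at hconj ⊢
  field_simp
  linear_combination hunit

section Blaschke

variable {n : ℕ} (a : Fin n → ℂ)

/-- The numerator of the Blaschke product `blaschke a`. -/
def blaschkeNum : ℂ[X] := ∏ j, (C (a j) - X)

/-- The denominator of the Blaschke product `blaschke a`. -/
def blaschkeDen : ℂ[X] := ∏ j, (1 - C ((starRingEnd ℂ) (a j)) * X)

/-- The polynomial `∏ (a_j - X) - β ∏ (1 - conj(a_j) X)`, whose roots are the solutions of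
`B(w) = β`. Taking `β` in an arbitrary `ℂ`-algebra gives both the equations of the individual fibres
(`β : ℂ`) and the equation satisfied by the coordinate over the algebra of functions of `B`. -/
def fiberPoly {S : Type*} [CommRing S] [Algebra ℂ S] (β : S) : S[X] :=
  (blaschkeNum a).map (algebraMap ℂ S) - C β * (blaschkeDen a).map (algebraMap ℂ S)

lemma fiberMS_eq_roots_fiberPoly (z : ℂ) :
    fiberMS a z = (fiberPoly a (blaschke a z)).roots := by
  simp only [fiberMS, fiberPoly, blaschkeNum, blaschkeDen, Algebra.algebraMap_self,
    Polynomial.map_id]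

lemma eval_blaschkeNum (z : ℂ) : (blaschkeNum a).eval z = ∏ j, (a j - z) := by
  simp [blaschkeNum, eval_prod]

lemma eval_blaschkeDen (z : ℂ) :
    (blaschkeDen a).eval z = ∏ j, (1 - (starRingEnd ℂ) (a j) * z) := by
  simp [blaschkeDen, eval_prod]

lemma blaschke_eq_eval_div_eval (z : ℂ) :
    blaschke a z = (blaschkeNum a).eval z / (blaschkeDen a).eval z := by
  rw [blaschke, Finset.prod_div_distrib, eval_blaschkeNum, eval_blaschkeDen]

variable {a}

lemma isRoot_fiberPoly_iff {β w : ℂ} :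
    (fiberPoly a β).IsRoot w ↔ (blaschkeNum a).eval w = β * (blaschkeDen a).eval w := by
  simp [fiberPoly, sub_eq_zero]

variable (a)

lemma natDegree_blaschkeNum_le : (blaschkeNum a).natDegree ≤ n := by
  refine (natDegree_prod_le _ _).trans
    ((Finset.sum_le_card_nsmul _ _ 1 fun j _ => ?_).trans (by simp))
  compute_degree

lemma coeff_blaschkeNum : (blaschkeNum a).coeff n = (-1) ^ n := by
  have h := coeff_prod_of_natDegree_le Finset.univ (fun j => C (a j) - X) 1
    fun j _ => by compute_degree
  simpa [blaschkeNum, coeff_C] using h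

lemma natDegree_blaschkeDen_le : (blaschkeDen a).natDegree ≤ n := by
  refine (natDegree_prod_le _ _).trans
    ((Finset.sum_le_card_nsmul _ _ 1 fun j _ => ?_).trans (by simp))
  compute_degree

lemma coeff_blaschkeDen : (blaschkeDen a).coeff n = ∏ j, -(starRingEnd ℂ) (a j) := by
  have h := coeff_prod_of_natDegree_le Finset.univ (fun j => 1 - C ((starRingEnd ℂ) (a j)) * X) 1
    fun j _ => by compute_degree
  simpa [blaschkeDen, coeff_one] using h

section

variable {S : Type*} [CommRing S] [Algebra ℂ S] (β : S)

lemma natDegree_fiberPoly_le : (fiberPoly a β).natDegree ≤ n := by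
  have hnum : ((blaschkeNum a).map (algebraMap ℂ S)).natDegree ≤ n :=
    natDegree_map_le.trans (natDegree_blaschkeNum_le a)
  have hden : ((blaschkeDen a).map (algebraMap ℂ S)).natDegree ≤ n :=
    natDegree_map_le.trans (natDegree_blaschkeDen_le a)
  exact natDegree_sub_le_of_le hnum ((natDegree_C_mul_le β _).trans hden) |>.trans (max_self n).le

lemma coeff_fiberPoly :
    (fiberPoly a β).coeff n = (-1) ^ n - β * algebraMap ℂ S (∏ j, -(starRingEnd ℂ) (a j)) := by
  simp [fiberPoly, coeff_blaschkeNum, coeff_blaschkeDen]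

end

/-- `w` lists the points of the fibre of `blaschke a` over `β`, with multiplicity. -/
def IsFiber (β : cDisk) (w : Fin n → cDisk) : Prop :=
  (fiberPoly a (β : ℂ)).roots = Finset.univ.val.map fun j => (w j : ℂ)

variable {a}

lemma IsFiber.isRoot {β : cDisk} {w : Fin n → cDisk} (hw : IsFiber a β w) (j : Fin n) :
    (fiberPoly a (β : ℂ)).IsRoot (w j) :=
  isRoot_of_mem_roots (hw ▸ Multiset.mem_map_of_mem _ (Finset.mem_univ j))

lemma eval_wronskian_of_isRoot {β w : ℂ} (hw : (fiberPoly a β).IsRoot w) :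
    (wronskian (blaschkeDen a) (blaschkeNum a)).eval w =
      (blaschkeDen a).eval w * (derivative (fiberPoly a β)).eval w := by
  rw [isRoot_fiberPoly_iff] at hw
  simp only [wronskian, fiberPoly, eval_sub, eval_mul, hw, derivative_sub, derivative_mul,
    derivative_C, eval_C, zero_mul, zero_add, Algebra.algebraMap_self, Polynomial.map_id]
  ring

lemma eval_blaschkeDen_ne_zero (ha : ∀ j, a j ∈ uDisk) {w : ℂ} (hw : w ∈ cDisk) :
    (blaschkeDen a).eval w ≠ 0 := by
  rw [eval_blaschkeDen]
  exact Finset.prod_ne_zero_iff.mpr fun j _ => one_sub_conj_mul_ne_zero (ha j) hw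

lemma isRoot_fiberPoly_blaschke (ha : ∀ j, a j ∈ uDisk) {w : ℂ} (hw : w ∈ cDisk) :
    (fiberPoly a (blaschke a w)).IsRoot w := by
  rw [isRoot_fiberPoly_iff, blaschke_eq_eval_div_eval,
    div_mul_cancel₀ _ (eval_blaschkeDen_ne_zero ha hw)]

lemma memDiskAlg_blaschke (ha : ∀ j, a j ∈ uDisk) : MemDiskAlg (blaschke a) := by
  have hden := (memDiskAlg_polynomial (blaschkeDen a)).inv fun z => eval_blaschkeDen_ne_zero ha
  have hnum := memDiskAlg_polynomial (blaschkeNum a)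
  have heq : blaschke a = fun z => (blaschkeNum a).eval z * ((blaschkeDen a).eval z)⁻¹ :=
    funext fun z => (blaschke_eq_eval_div_eval a z).trans (div_eq_mul_inv _ _)
  rw [heq]
  exact ⟨hnum.1.mul hden.1, hnum.2.mul hden.2⟩

/- The Wronskian is the numerator of the derivative of `B`, so the left side is `w` times the
logarithmic derivative of `B`; on the unit circle it is a sum of Poisson kernels. -/
lemma mul_eval_wronskian_div (ha : ∀ j, a j ∈ uDisk) {w : ℂ} (hw : ‖w‖ = 1) :
    w * ((wronskian (blaschkeDen a) (blaschkeNum a)).eval w /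
      ((blaschkeNum a).eval w * (blaschkeDen a).eval w)) =
      ((∑ j, (1 - ‖a j‖ ^ 2) / ‖a j - w‖ ^ 2 : ℝ) : ℂ) := by
  have hsub j : a j - w ≠ 0 := sub_ne_zero.mpr fun h => by
    simpa [h, hw] using mem_uDisk.mp (ha j)
  have hden j := one_sub_conj_mul_ne_zero (ha j) (mem_cDisk.mpr hw.le)
  have hnumLog := eval_derivative_prod_div_eval_prod Finset.univ (fun j => C (a j) - X) (x := w)
    fun j _ => by simpa using hsub j
  have hdenLog := eval_derivative_prod_div_eval_prod Finset.univ
    (fun j => 1 - C ((starRingEnd ℂ) (a j)) * X) (x := w) fun j _ => by simpa using hden j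
  have hquot : (wronskian (blaschkeDen a) (blaschkeNum a)).eval w /
      ((blaschkeNum a).eval w * (blaschkeDen a).eval w) =
      (derivative (blaschkeNum a)).eval w / (blaschkeNum a).eval w -
        (derivative (blaschkeDen a)).eval w / (blaschkeDen a).eval w := by
    have hP : (blaschkeNum a).eval w ≠ 0 :=
      eval_blaschkeNum a w ▸ Finset.prod_ne_zero_iff.mpr fun j _ => hsub j
    have hQ := eval_blaschkeDen_ne_zero ha (mem_cDisk.mpr hw.le)
    rw [wronskian, eval_sub, eval_mul, eval_mul]
    field_simp
  rw [hquot, blaschkeNum, blaschkeDen, hnumLog, hdenLog, ← Finset.sum_sub_distrib,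
    Finset.mul_sum, Complex.ofReal_sum]
  refine Finset.sum_congr rfl fun j _ => ?_
  simpa using mul_neg_one_div_sub_conj_div hw (hsub j)

variable [NeZero n]

lemma cmp_norm_blaschkeNum_norm_blaschkeDen (ha : ∀ j, a j ∈ uDisk) (w : ℂ) :
    cmp ‖(blaschkeNum a).eval w‖ ‖(blaschkeDen a).eval w‖ = cmp ‖w‖ 1 := by
  have hfactor j := cmp_norm_sub_norm_one_sub_conj_mul (ha j) w
  rw [eval_blaschkeNum, eval_blaschkeDen, norm_prod, norm_prod]
  rcases lt_trichotomy ‖w‖ 1 with hw | hw | hw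
  · rw [(cmp_eq_lt_iff _ _).mpr hw, cmp_eq_lt_iff]
    exact prod_lt_prod_of_nonempty_of_nonneg Finset.univ_nonempty (fun _ _ => norm_nonneg _)
      fun j _ => (lt_iff_lt_of_cmp_eq_cmp (hfactor j)).mpr hw
  · rw [(cmp_eq_eq_iff _ _).mpr hw, cmp_eq_eq_iff]
    exact Finset.prod_congr rfl fun j _ => (eq_iff_eq_of_cmp_eq_cmp (hfactor j)).mpr hw
  · rw [(cmp_eq_gt_iff _ _).mpr hw, cmp_eq_gt_iff]
    exact prod_lt_prod_of_nonempty_of_nonneg Finset.univ_nonempty (fun _ _ => norm_nonneg _)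
      fun j _ => (lt_iff_lt_of_cmp_eq_cmp (cmp_eq_cmp_symm.mp (hfactor j))).mpr hw

lemma eval_blaschkeDen_ne_zero_of_isRoot (ha : ∀ j, a j ∈ uDisk) {β w : ℂ}
    (hw : (fiberPoly a β).IsRoot w) :
    (blaschkeDen a).eval w ≠ 0 := by
  rw [isRoot_fiberPoly_iff] at hw
  intro hden
  refine eval_blaschkeDen_ne_zero ha (mem_cDisk.mpr ?_) hden
  refine (le_iff_le_of_cmp_eq_cmp (cmp_norm_blaschkeNum_norm_blaschkeDen ha w)).mp ?_
  rw [hw, hden, mul_zero]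

lemma blaschke_eq_of_isRoot (ha : ∀ j, a j ∈ uDisk) {β w : ℂ} (hw : (fiberPoly a β).IsRoot w) :
    blaschke a w = β := by
  rw [blaschke_eq_eval_div_eval, div_eq_iff (eval_blaschkeDen_ne_zero_of_isRoot ha hw)]
  exact isRoot_fiberPoly_iff.mp hw

lemma cmp_norm_of_isRoot (ha : ∀ j, a j ∈ uDisk) {β w : ℂ} (hw : (fiberPoly a β).IsRoot w) :
    cmp ‖β‖ 1 = cmp ‖w‖ 1 := by
  have hden := norm_pos_iff.mpr (eval_blaschkeDen_ne_zero_of_isRoot ha hw)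
  rw [← cmp_norm_blaschkeNum_norm_blaschkeDen ha w, isRoot_fiberPoly_iff.mp hw, norm_mul,
    ← cmp_mul_pos_right hden, one_mul]

lemma blaschke_mem_cDisk (ha : ∀ j, a j ∈ uDisk) {w : ℂ} (hw : w ∈ cDisk) : blaschke a w ∈ cDisk :=
  mem_cDisk.mpr <| (le_iff_le_of_cmp_eq_cmp
    (cmp_norm_of_isRoot ha (isRoot_fiberPoly_blaschke ha hw))).mpr (mem_cDisk.mp hw)

lemma isUnit_coeff_fiberPoly {S : Type*} [NormedCommRing S] [NormedAlgebra ℂ S] [CompleteSpace S]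
    (ha : ∀ j, a j ∈ uDisk) {β : S} (hβ : ‖β‖ ≤ 1) : IsUnit ((fiberPoly a β).coeff n) := by
  set c : ℂ := (-1) ^ n * ∏ j, -(starRingEnd ℂ) (a j)
  have hc : ‖c‖ < 1 := by
    simpa [c, norm_prod] using prod_lt_prod_of_nonempty_of_nonneg (s := Finset.univ) (g := 1)
      Finset.univ_nonempty (fun j _ => norm_nonneg (a j)) fun j _ => mem_uDisk.mp (ha j)
  have hfactor : (fiberPoly a β).coeff n = (-1) ^ n * (1 - c • β) := by
    have hsign : (-1 : S) ^ n * (-1) ^ n = 1 := by rw [← mul_pow]; simp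
    rw [coeff_fiberPoly, Algebra.smul_def, map_mul, map_pow, map_neg, map_one]
    linear_combination β * algebraMap ℂ S (∏ j, -(starRingEnd ℂ) (a j)) * hsign
  have hnorm : ‖c • β‖ < 1 := by
    rw [norm_smul]
    exact mul_lt_one_of_nonneg_of_lt_one_left (norm_nonneg c) hc hβ
  rw [hfactor]
  exact (isUnit_one.neg.pow n).mul (isUnit_one_sub_of_norm_lt_one hnorm)

lemma coeff_fiberPoly_ne_zero (ha : ∀ j, a j ∈ uDisk) {β : ℂ} (hβ : β ∈ cDisk) :
    (fiberPoly a β).coeff n ≠ 0 :=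
  (isUnit_coeff_fiberPoly ha (mem_cDisk.mp hβ)).ne_zero

lemma natDegree_fiberPoly (ha : ∀ j, a j ∈ uDisk) {β : ℂ} (hβ : β ∈ cDisk) :
    (fiberPoly a β).natDegree = n :=
  (natDegree_fiberPoly_le a β).antisymm
    (le_natDegree_of_ne_zero (coeff_fiberPoly_ne_zero ha hβ))

lemma fiberPoly_ne_zero (ha : ∀ j, a j ∈ uDisk) {β : ℂ} (hβ : β ∈ cDisk) :
    fiberPoly a β ≠ 0 := fun h =>
  coeff_fiberPoly_ne_zero ha hβ (by rw [h, coeff_zero])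

lemma eval_wronskian_ne_zero (ha : ∀ j, a j ∈ uDisk) {w : ℂ} (hw : ‖w‖ = 1) :
    (wronskian (blaschkeDen a) (blaschkeNum a)).eval w ≠ 0 := by
  intro h
  have hsum := mul_eval_wronskian_div ha hw
  rw [h, zero_div, mul_zero, eq_comm, Complex.ofReal_eq_zero] at hsum
  refine hsum.not_gt (Finset.sum_pos (fun j _ => ?_) Finset.univ_nonempty)
  have haj := mem_uDisk.mp (ha j)
  have hsub : a j - w ≠ 0 := sub_ne_zero.mpr fun h => by simp [h, hw] at haj
  have hpos : 0 < 1 - ‖a j‖ ^ 2 := by nlinarith [norm_nonneg (a j)]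
  positivity

lemma finite_setOf_eval_wronskian_eq_zero (ha : ∀ j, a j ∈ uDisk) :
    {w | (wronskian (blaschkeDen a) (blaschkeNum a)).eval w = 0}.Finite :=
  finite_setOfPred_isRoot fun h => eval_wronskian_ne_zero ha norm_one (by rw [h, eval_zero])

lemma finite_setOf_blaschke_eq_critical (ha : ∀ j, a j ∈ uDisk) :
    {z ∈ cDisk | ∃ c ∈ cDisk, (wronskian (blaschkeDen a) (blaschkeNum a)).eval c = 0 ∧
      blaschke a z = blaschke a c}.Finite := by
  have hcrit := (finite_setOf_eval_wronskian_eq_zero ha).inter_of_left cDisk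
  refine (hcrit.biUnion fun c hc => finite_setOfPred_isRoot
    (fiberPoly_ne_zero ha (blaschke_mem_cDisk ha hc.2))).subset ?_
  rintro z ⟨hz, c, hc, hc0, hzc⟩
  exact mem_biUnion (show c ∈ _ from ⟨hc0, hc⟩) (hzc ▸ isRoot_fiberPoly_blaschke ha hz)

/-- The Blaschke product as a self-map of the closed disk. -/
def blaschkeMap (ha : ∀ j, a j ∈ uDisk) : C(cDisk, cDisk) where
  toFun z := ⟨blaschke a z, blaschke_mem_cDisk ha z.2⟩
  continuous_toFun := (memDiskAlg_blaschke ha).1.domRestrict.subtype_mk _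

lemma exists_isFiber (ha : ∀ j, a j ∈ uDisk) (β : cDisk) : ∃ w, IsFiber a β w := by
  have hcard : Multiset.card (fiberPoly a (β : ℂ)).roots = n := by
    rw [← (IsAlgClosed.splits _).natDegree_eq_card_roots, natDegree_fiberPoly ha β.2]
  obtain ⟨l, hl⟩ := Quot.exists_rep (fiberPoly a (β : ℂ)).roots
  change (l : Multiset ℂ) = _ at hl
  have hlen : l.length = n := by rw [← hcard, ← hl, Multiset.coe_card]
  subst hlen
  have hmem j : l.get j ∈ cDisk := by
    have hroot : (fiberPoly a (β : ℂ)).IsRoot (l.get j) :=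
      isRoot_of_mem_roots (hl ▸ l.get_mem j)
    exact mem_cDisk.mpr ((le_iff_le_of_cmp_eq_cmp (cmp_norm_of_isRoot ha hroot)).mp
      (mem_cDisk.mp β.2))
  refine ⟨fun j => ⟨l.get j, hmem j⟩, ?_⟩
  rw [IsFiber, ← hl, Fin.univ_val_map]
  exact congrArg _ (List.ofFn_get l).symm

namespace IsFiber

variable {β : cDisk} {w : Fin n → cDisk}

lemma blaschkeMap_eq (ha : ∀ j, a j ∈ uDisk) (hw : IsFiber a β w) (j : Fin n) :
    blaschkeMap ha (w j) = β :=
  Subtype.ext (blaschke_eq_of_isRoot ha (hw.isRoot j))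

lemma cmp_norm (ha : ∀ j, a j ∈ uDisk) (hw : IsFiber a β w) (j : Fin n) :
    cmp ‖(β : ℂ)‖ 1 = cmp ‖(w j : ℂ)‖ 1 :=
  cmp_norm_of_isRoot ha (hw.isRoot j)

lemma calD_eq (ha : ∀ j, a j ∈ uDisk) (hw : IsFiber a β w) (f : ℂ → ℂ) (i : Fin n) :
    calD a f (w i) = ∏ j ∈ {i}ᶜ, (f (w i) - f (w j)) := by
  have hfiber : fiberMS a (w i) = Finset.univ.val.map fun j => (w j : ℂ) := by
    rw [fiberMS_eq_roots_fiberPoly, blaschke_eq_of_isRoot ha (hw.isRoot i), hw]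
  rw [calD, hfiber, ← Multiset.map_erase_of_mem _ _ (Finset.mem_univ i), Multiset.map_map,
    Finset.compl_singleton]
  rfl

lemma injective_of_wronskian_ne_zero (ha : ∀ j, a j ∈ uDisk) (hw : IsFiber a β w)
    (hcrit : ∀ j, (wronskian (blaschkeDen a) (blaschkeNum a)).eval (w j : ℂ) ≠ 0) :
    Function.Injective fun j => (w j : ℂ) := by
  have hnodup : (fiberPoly a (β : ℂ)).roots.Nodup := by
    refine Multiset.nodup_iff_count_le_one.mpr fun z => ?_
    rw [count_roots]
    by_contra! hz
    obtain ⟨hroot, hderiv⟩ := (one_lt_rootMultiplicity_iff_isRoot (fiberPoly_ne_zero ha β.2)).mp hz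
    have hmem : z ∈ (fiberPoly a (β : ℂ)).roots :=
      (mem_roots (fiberPoly_ne_zero ha β.2)).mpr hroot
    rw [hw] at hmem
    obtain ⟨j, -, rfl⟩ := Multiset.mem_map.mp hmem
    exact hcrit j (by rw [eval_wronskian_of_isRoot hroot, hderiv.eq_zero, mul_zero])
  rw [hw] at hnodup
  exact fun i j hij => Multiset.inj_on_of_nodup_map hnodup i (Finset.mem_univ i) j
    (Finset.mem_univ j) hij

lemma det_vandermonde_ne_zero (ha : ∀ j, a j ∈ uDisk) (hw : IsFiber a β w)
    (hβ : ‖(β : ℂ)‖ = 1) : (Matrix.vandermonde fun j => (w j : ℂ)).det ≠ 0 :=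
  Matrix.det_vandermonde_ne_zero_iff.mpr <| hw.injective_of_wronskian_ne_zero ha fun j =>
    eval_wronskian_ne_zero ha ((eq_iff_eq_of_cmp_eq_cmp (hw.cmp_norm ha j)).mp hβ)

end IsFiber

lemma isFiber_iff_fiberPoly_eq (ha : ∀ j, a j ∈ uDisk) {β : cDisk} {w : Fin n → cDisk} :
    IsFiber a β w ↔
      fiberPoly a (β : ℂ) = C ((fiberPoly a (β : ℂ)).coeff n) * ∏ j, (X - C (w j : ℂ)) := by
  have hroots : (∏ j, (X - C (w j : ℂ))).roots = Finset.univ.val.map fun j => (w j : ℂ) := by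
    rw [Finset.prod, ← roots_multiset_prod_X_sub_C (Finset.univ.val.map fun j => (w j : ℂ)),
      Multiset.map_map]
    rfl
  constructor
  · intro hw
    conv_lhs => rw [(IsAlgClosed.splits (fiberPoly a (β : ℂ))).eq_prod_roots, hw]
    rw [leadingCoeff, natDegree_fiberPoly ha β.2, Multiset.map_map]
    rfl
  · intro h
    rw [IsFiber, h, roots_C_mul _ (coeff_fiberPoly_ne_zero ha β.2), hroots]

lemma isClosed_setOf_isFiber (ha : ∀ j, a j ∈ uDisk) :
    IsClosed {p : cDisk × (Fin n → cDisk) | IsFiber a p.1 p.2} := by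
  have heval (p q : ℂ[X]) : p = q ↔ ∀ x, p.eval x = q.eval x :=
    ⟨fun h x => by rw [h], Polynomial.funext⟩
  simp only [isFiber_iff_fiberPoly_eq ha, heval, ofPred_forall]
  refine isClosed_iInter fun x => isClosed_eq ?_ ?_
  · simp only [fiberPoly, eval_sub, eval_mul, eval_C]
    fun_prop
  · simp only [coeff_fiberPoly, eval_mul, eval_C, eval_prod, eval_sub, eval_X]
    fun_prop

lemma exists_norm_vandermonde_inv_le_of_circle (ha : ∀ j, a j ∈ uDisk) :
    ∃ K : ℝ, ∀ (β : cDisk) (w : Fin n → cDisk), ‖(β : ℂ)‖ = 1 → IsFiber a β w →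
      ∀ k j, ‖(Matrix.vandermonde fun j => (w j : ℂ))⁻¹ k j‖ ≤ K := by
  set V : cDisk × (Fin n → cDisk) → Matrix (Fin n) (Fin n) ℂ :=
    fun p => Matrix.vandermonde fun j => (p.2 j : ℂ)
  set S : Set (cDisk × (Fin n → cDisk)) := {p | ‖(p.1 : ℂ)‖ = 1} ∩ {p | IsFiber a p.1 p.2}
  have hS : IsCompact S :=
    ((isClosed_eq (by fun_prop) continuous_const).inter (isClosed_setOf_isFiber ha)).isCompact
  have hV : Continuous V := continuous_matrix fun i j => by
    simp only [V, Matrix.vandermonde_apply]; fun_prop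
  have hdet : ∀ p ∈ S, (V p).det ≠ 0 := fun _ ⟨hp1, hp⟩ => hp.det_vandermonde_ne_zero ha hp1
  have hcont : ContinuousOn (fun p => (V p)⁻¹) S := by
    simp only [Matrix.inv_def, Ring.inverse_eq_inv']
    exact (hV.matrix_det.continuousOn.inv₀ hdet).smul hV.matrix_adjugate.continuousOn
  have hsum : ContinuousOn (fun p => ∑ k, ∑ j, ‖(V p)⁻¹ k j‖) S :=
    continuousOn_finsetSum _ fun k _ => continuousOn_finsetSum _ fun j _ =>
      (continuousOn_pi.mp (continuousOn_pi.mp hcont k) j).norm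
  obtain ⟨K, hK⟩ := hS.exists_bound_of_continuousOn hsum
  refine ⟨K, fun β w hβ hw k j => le_trans ?_ ((le_abs_self _).trans (hK (β, w) ⟨hβ, hw⟩))⟩
  have hrow := Finset.single_le_sum (fun j _ => norm_nonneg ((V (β, w))⁻¹ k j)) (Finset.mem_univ j)
  exact hrow.trans <| Finset.single_le_sum (f := fun k => ∑ j, ‖(V (β, w))⁻¹ k j‖)
    (fun k _ => Finset.sum_nonneg fun j _ => norm_nonneg _) (Finset.mem_univ k)

end Blaschke

/-! ### The disk algebra as a free module over the functions of `B` -/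

section BlaschkeAlgebra

open DiskAlgebra Matrix

variable {n : ℕ} {a : Fin n → ℂ} (ha : ∀ j, a j ∈ uDisk)

/-- The closed subalgebra of the disk algebra generated by the Blaschke product. -/
def blaschkeAlgebra : Subalgebra ℂ DiskAlgebra :=
  Algebra.elemental ℂ (memDiskAlg_blaschke ha).toDiskAlgebra

/-- The Blaschke product as an element of the closed algebra it generates. -/
def blaschkeElem : blaschkeAlgebra ha :=
  ⟨(memDiskAlg_blaschke ha).toDiskAlgebra, Algebra.elemental.self_mem ℂ _⟩

instance : CompleteSpace (blaschkeAlgebra ha) :=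
  (Algebra.elemental.isClosed ℂ (memDiskAlg_blaschke ha).toDiskAlgebra).completeSpace_coe

lemma evalAt_eq_of_blaschke_eq (r : blaschkeAlgebra ha) {z w : cDisk}
    (h : blaschke a z = blaschke a w) : evalAt z r = evalAt w r := by
  have hle : blaschkeAlgebra ha ≤ AlgHom.equalizer (evalAt z) (evalAt w) :=
    Algebra.elemental.le_of_mem (isClosed_eq (continuous_evalAt z) (continuous_evalAt w)) h
  exact hle r.2

lemma aeval_coord_fiberPoly : aeval coord (fiberPoly a (blaschkeElem ha)) = 0 := by
  ext z
  have hz := isRoot_fiberPoly_iff.mp (isRoot_fiberPoly_blaschke ha z.2)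
  have hmap (p : ℂ[X]) : evalAt z (aeval coord (p.map (algebraMap ℂ (blaschkeAlgebra ha)))) =
      p.eval (z : ℂ) := by
    rw [aeval_map_algebraMap, evalAt_aeval_coord]
  rw [fiberPoly, map_sub, map_mul, aeval_C, map_sub, map_mul, hmap, hmap, map_zero, sub_eq_zero]
  exact hz

lemma dense_adjoin_blaschkeAlgebra_coord :
    Dense (Algebra.adjoin (blaschkeAlgebra ha) {coord} : Set DiskAlgebra) := by
  have hle : Algebra.adjoin ℂ {coord} ≤
      (Algebra.adjoin (blaschkeAlgebra ha) {coord}).restrictScalars ℂ :=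
    Algebra.adjoin_le (Algebra.subset_adjoin (R := blaschkeAlgebra ha))
  exact dense_adjoin_coord.mono hle

variable [NeZero n]

lemma IsFiber.evalAt_eq {z : cDisk} {w : Fin n → cDisk} (hw : IsFiber a (blaschkeMap ha z) w)
    (r : blaschkeAlgebra ha) (j : Fin n) : evalAt (w j) r = evalAt z r :=
  evalAt_eq_of_blaschke_eq ha r (congrArg Subtype.val (hw.blaschkeMap_eq ha j))

lemma IsFiber.vandermonde_mulVec_evalAt {z : cDisk} {w : Fin n → cDisk}
    (hw : IsFiber a (blaschkeMap ha z) w) (c : Fin n → blaschkeAlgebra ha) :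
    Matrix.vandermonde (fun j => (w j : ℂ)) *ᵥ (fun k => evalAt z (c k)) =
      fun j => evalAt (w j) (∑ k, c k • coord ^ (k : ℕ)) := by
  ext j
  simp only [Matrix.mulVec, dotProduct, Matrix.vandermonde_apply, map_sum, Subalgebra.smul_def,
    smul_eq_mul, map_mul, map_pow, evalAt_coord, hw.evalAt_eq ha, mul_comm]

lemma norm_blaschkeMap_eq_one {z : cDisk} (hz : ‖(z : ℂ)‖ = 1) : ‖(blaschkeMap ha z : ℂ)‖ = 1 :=
  (eq_iff_eq_of_cmp_eq_cmp (cmp_norm_of_isRoot ha (isRoot_fiberPoly_blaschke ha z.2))).mpr hz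

lemma exists_norm_coeff_le :
    ∃ K : ℝ, ∀ (c : Fin n → blaschkeAlgebra ha) (k : Fin n),
      ‖c k‖ ≤ K * ‖∑ k, c k • coord ^ (k : ℕ)‖ := by
  obtain ⟨K, hK⟩ := exists_norm_vandermonde_inv_le_of_circle ha
  refine ⟨n * |K|, fun c k => norm_le_of_forall_circle (by positivity) fun z hz => ?_⟩
  obtain ⟨w, hw⟩ := exists_isFiber ha (blaschkeMap ha z)
  have hβ := norm_blaschkeMap_eq_one ha hz
  set f := ∑ k, c k • coord ^ (k : ℕ)
  set V := Matrix.vandermonde fun j => (w j : ℂ)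
  have hV : IsUnit V.det := (hw.det_vandermonde_ne_zero ha hβ).isUnit
  have hcramer : evalAt z (c k) = ∑ j, V⁻¹ k j * evalAt (w j) f := by
    have hsolve : (fun k => evalAt z (c k)) = V⁻¹ *ᵥ fun j => evalAt (w j) f := by
      rw [← hw.vandermonde_mulVec_evalAt ha c, Matrix.mulVec_mulVec, Matrix.nonsing_inv_mul V hV,
        Matrix.one_mulVec]
    exact congrFun hsolve k
  calc ‖evalAt z (c k)‖ ≤ ∑ j, ‖V⁻¹ k j * evalAt (w j) f‖ := hcramer ▸ norm_sum_le _ _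
    _ ≤ ∑ _j : Fin n, |K| * ‖f‖ := by
      refine Finset.sum_le_sum fun j _ => (norm_mul_le _ _).trans ?_
      gcongr
      · exact (hK _ w hβ hw k j).trans (le_abs_self K)
      · exact norm_evalAt_le (w j) f
    _ = n * |K| * ‖f‖ := by
      rw [Finset.sum_const, Finset.card_univ, Fintype.card_fin, nsmul_eq_mul, mul_assoc]

lemma norm_blaschkeElem_le : ‖blaschkeElem ha‖ ≤ 1 :=
  (norm_le_iff zero_le_one).mpr fun z => mem_cDisk.mp (blaschke_mem_cDisk ha z.2)

lemma span_range_coord_pow :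
    Submodule.span (blaschkeAlgebra ha) (range fun k : Fin n => coord ^ (k : ℕ)) = ⊤ := by
  obtain ⟨K, hK⟩ := exists_norm_coeff_le ha
  have hunit := isUnit_coeff_fiberPoly (S := blaschkeAlgebra ha) ha (norm_blaschkeElem_le ha)
  exact span_range_pow_eq_top_of_norm_le hunit (natDegree_fiberPoly_le a _)
    (aeval_coord_fiberPoly ha) hK (dense_adjoin_blaschkeAlgebra_coord ha)

lemma linearIndependent_coord_pow :
    LinearIndependent (blaschkeAlgebra ha) fun k : Fin n => coord ^ (k : ℕ) :=
  linearIndependent_of_norm_le (exists_norm_coeff_le ha).choose_spec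

/-- The powers `1, z, …, z^(n-1)` form a basis of the disk algebra over `blaschkeAlgebra`. -/
def coordBasis : Module.Basis (Fin n) (blaschkeAlgebra ha) DiskAlgebra :=
  .mk (linearIndependent_coord_pow ha) (span_range_coord_pow ha).ge

@[simp]
lemma coordBasis_apply (k : Fin n) : coordBasis ha k = coord ^ (k : ℕ) :=
  Module.Basis.mk_apply ..

lemma continuous_coordBasis_repr (k : Fin n) :
    Continuous fun f => (coordBasis ha).repr f k := by
  obtain ⟨K, hK⟩ := exists_norm_coeff_le ha
  refine continuous_repr_of_norm_le (coordBasis ha) (K := K) ?_ k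
  simpa only [coordBasis_apply] using hK

end BlaschkeAlgebra

/-! ### Density of `ℂ[B, g]` -/

section Density

open DiskAlgebra

variable {n : ℕ} [NeZero n] {a : Fin n → ℂ} (ha : ∀ j, a j ∈ uDisk)

lemma IsFiber.evalAt_det_pow_sq_eq_evalAt_norm {z : cDisk} {w : Fin n → cDisk}
    (hw : IsFiber a (blaschkeMap ha z) w) (hinj : Function.Injective fun j => (w j : ℂ))
    {g Γ : ℂ → ℂ} (hg : MemDiskAlg g) (hΓ : MemDiskAlg Γ)
    (hΓg : ∀ j, Γ (w j) * calD a id (w j) = calD a g (w j)) :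
    evalAt z (((coordBasis ha).det fun k => hg.toDiskAlgebra ^ (k : ℕ)) ^ 2 : blaschkeAlgebra ha) =
      evalAt z (Algebra.norm (blaschkeAlgebra ha) hΓ.toDiskAlgebra : blaschkeAlgebra ha) := by
  have hprod (i : Fin n) :
      Γ (w i) * ∏ j ∈ {i}ᶜ, ((w i : ℂ) - w j) = ∏ j ∈ {i}ᶜ, (g (w i) - g (w j)) := by
    simpa only [hw.calD_eq ha, id] using hΓg i
  exact map_det_pow_sq_eq_map_norm (coordBasis ha)
    (ev := (evalAt z).toRingHom.comp (algebraMap (blaschkeAlgebra ha) DiskAlgebra))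
    (σ := fun j => (evalAt (w j)).toRingHom) (coordBasis_apply ha) (fun j r => hw.evalAt_eq ha r j)
    hinj hprod

lemma det_pow_sq_eq_norm {g Γ : ℂ → ℂ} (hg : MemDiskAlg g) (hΓ : MemDiskAlg Γ)
    (hΓg : ∀ z ∈ uDisk, Γ z * calD a id z = calD a g z) :
    ((coordBasis ha).det fun k : Fin n => hg.toDiskAlgebra ^ (k : ℕ)) ^ 2 =
      Algebra.norm (blaschkeAlgebra ha) hΓ.toDiskAlgebra := by
  refine Subtype.ext (eq_of_forall_evalAt_eq_of_countable
    (finite_setOf_blaschke_eq_critical ha).countable fun z ⟨hz, hzcrit⟩ => ?_)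
  obtain ⟨w, hw⟩ := exists_isFiber ha (blaschkeMap ha z)
  have hzw (j : Fin n) : blaschke a z = blaschke a (w j) :=
    congrArg Subtype.val (hw.blaschkeMap_eq ha j).symm
  have hBz : ‖(blaschkeMap ha z : ℂ)‖ < 1 :=
    (lt_iff_lt_of_cmp_eq_cmp (cmp_norm_of_isRoot ha (isRoot_fiberPoly_blaschke ha z.2))).mpr
      (mem_uDisk.mp hz)
  refine hw.evalAt_det_pow_sq_eq_evalAt_norm ha ?_ hg hΓ fun j => hΓg _ ?_
  · exact hw.injective_of_wronskian_ne_zero ha fun j hj =>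
      hzcrit ⟨z.2, w j, (w j).2, hj, hzw j⟩
  · exact mem_uDisk.mpr ((lt_iff_lt_of_cmp_eq_cmp (hw.cmp_norm ha j)).mp hBz)

lemma dense_adjoin_blaschke_iff_adjoin_eq_top (x : DiskAlgebra) :
    Dense (Algebra.adjoin ℂ {(blaschkeElem ha : DiskAlgebra), x} : Set DiskAlgebra) ↔
      Algebra.adjoin (blaschkeAlgebra ha) {x} = ⊤ := by
  set T := (Algebra.adjoin ℂ {(blaschkeElem ha : DiskAlgebra), x}).topologicalClosure
  have hT (y : DiskAlgebra) (hy : y ∈ ({(blaschkeElem ha : DiskAlgebra), x} : Set DiskAlgebra)) :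
      y ∈ T :=
    Subalgebra.le_topologicalClosure _ (Algebra.subset_adjoin hy)
  have hle : Algebra.adjoin ℂ {(blaschkeElem ha : DiskAlgebra), x} ≤
      (Algebra.adjoin (blaschkeAlgebra ha) {x}).restrictScalars ℂ := by
    refine Algebra.adjoin_le (insert_subset ?_ ?_)
    · exact Subalgebra.algebraMap_mem (Algebra.adjoin (blaschkeAlgebra ha) {x}) (blaschkeElem ha)
    · exact Algebra.subset_adjoin (R := blaschkeAlgebra ha)
  constructor
  · intro hdense
    refine Algebra.toSubmodule_eq_top.mp ?_
    exact eq_top_of_dense_of_continuous_repr (coordBasis ha) (continuous_coordBasis_repr ha)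
      (hdense.mono hle)
  · intro htop y
    have hscalar : blaschkeAlgebra ha ≤ T :=
      Algebra.elemental.le_of_mem (Subalgebra.isClosed_topologicalClosure _)
        (hT _ (mem_insert _ _))
    refine Algebra.adjoin_induction (R := blaschkeAlgebra ha) (p := fun y _ => y ∈ T) ?_ ?_ ?_ ?_
      (htop ▸ Algebra.mem_top : y ∈ Algebra.adjoin (blaschkeAlgebra ha) {x})
    · exact fun y hy => hT y (mem_insert_of_mem _ hy)
    · exact fun r => hscalar r.2
    · exact fun _ _ _ _ => add_mem
    · exact fun _ _ _ _ => mul_mem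

lemma adjoin_eq_top_iff_isUnit_gamma {g Γ : ℂ → ℂ} (hg : MemDiskAlg g) (hΓ : MemDiskAlg Γ)
    (hΓg : ∀ z ∈ uDisk, Γ z * calD a id z = calD a g z) :
    Algebra.adjoin (blaschkeAlgebra ha) {hg.toDiskAlgebra} = ⊤ ↔ IsUnit hΓ.toDiskAlgebra := by
  rw [adjoin_eq_top_iff_isUnit_det (coordBasis ha), ← isUnit_pow_iff two_ne_zero,
    det_pow_sq_eq_norm ha hg hΓ hΓg, isUnit_norm_iff (coordBasis ha)]

end Density

theorem stmt18_general {n : ℕ} [NeZero n] {a : Fin n → ℂ} (ha : ∀ j, a j ∈ uDisk)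
    {g Γg : ℂ → ℂ} (hg : MemDiskAlg g) (hΓda : MemDiskAlg Γg)
    (hΓeq : ∀ z ∈ uDisk, Γg z * calD a id z = calD a g z) :
    (∀ f : ℂ → ℂ, MemDiskAlg f → f ∈ daClosure (algGen2 (blaschke a) g)) ↔
      ∀ z ∈ cDisk, Γg z ≠ 0 := by
  rw [← DiskAlgebra.dense_adjoin_pair_iff (memDiskAlg_blaschke ha) hg]
  refine (dense_adjoin_blaschke_iff_adjoin_eq_top ha hg.toDiskAlgebra).trans ?_
  rw [adjoin_eq_top_iff_isUnit_gamma ha hg hΓda hΓeq,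
    DiskAlgebra.isUnit_iff_forall_evalAt_ne_zero, Subtype.forall]
  rfl

/-- **Theorem E(2).** For `g` in the disk algebra, `ℂ[B,g]` is dense in
`A(𝔻̄)` iff `Γ(g)` has no zeros in the closed unit disk. -/
theorem stmt18 {n : ℕ} (hn : 2 ≤ n) (a : Fin n → ℂ) (ha : ∀ j, a j ∈ uDisk)
    (ha0 : a ⟨0, by omega⟩ = 0)
    (g Γg : ℂ → ℂ) (hg : MemDiskAlg g)
    (hΓda : MemDiskAlg Γg) (hΓeq : ∀ z ∈ uDisk, Γg z * calD a id z = calD a g z) :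
    (∀ f, MemDiskAlg f → f ∈ daClosure (algGen2 (blaschke a) g)) ↔
      ∀ z ∈ cDisk, Γg z ≠ 0 := by
  have : NeZero n := ⟨by omega⟩
  exact stmt18_general ha hg hΓda hΓeq
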